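/- arXiv:math/0703626 — 2 statements merged into one kernel-verified Lean document; each statement's English description precedes it below -/
import Mathlib

section
/- Let $X, Y$ be Banach spaces, $\Omega$ a compact Hausdorff space, and $U : C(\Omega, X) \to Y$ a Dunford–Pettis bounded linear operator. Define $U_\# : X \to L(C(\Omega), Y)$ by $(U_\# x)(\varphi) = U(\varphi \otimes x)$, where $(\varphi \otimes x)(\omega) = \varphi(\omega)x$. Then $U_\#$ is itself a Dunford–Pettis operator: for every weakly null sequence $(x_n)$ in $X$, $\|U_\#(x_n)\|_{L(C(\Omega),Y)} \to 0$. -/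
open Filter Topology

/-- The elementary tensor `φ ⊗ x` in `C(Ω, X)`, `(φ ⊗ x)(ω) = φ(ω) • x`. -/
def tensor {Ω X : Type*} [TopologicalSpace Ω] [NormedAddCommGroup X] [NormedSpace ℝ X]
    (φ : C(Ω, ℝ)) (x : X) : C(Ω, X) :=
  ⟨fun ω => φ ω • x, (map_continuous φ).smul continuous_const⟩

/-!
The point is that `φₙ ⊗ xₙ` is weakly null whenever `xₙ` is weakly null and `φₙ` is bounded:
choosing `φₙ` in the unit ball so that `‖U (φₙ ⊗ xₙ)‖` exceeds `ε` if it can, the Dunford–Pettis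
property of `U` gives the bound uniformly over the unit ball.

Embed `C(Ω, X)` isometrically into `C(Ω × B, ℝ)`, where `B` is the dual unit ball with the weak-*
topology, by `J f (ω, b) = b (f ω)`. A Hahn–Banach argument gives, for each bounded functional `Φ`
on `C(Ω, X)`, a positive functional `Λ` on `C(Ω × B, ℝ)` with `|Φ f| ≤ Λ |J f|`. By the Riesz
representation theorem `Λ` is a measure, so dominated convergence shows that bounded sequences
which are pointwise weakly null are weakly null.
-/

theorem exists_linearMap_add_le_sublinear {V E : Type*} [AddCommGroup V] [Module ℝ V]
    [AddCommGroup E] [Module ℝ E] (Φ : E →ₗ[ℝ] ℝ) (p : V × E → ℝ)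
    (p_smul : ∀ c : ℝ, 0 < c → ∀ x, p (c • x) = c * p x) (p_add : ∀ x y, p (x + y) ≤ p x + p y)
    (Φ_le_p : ∀ f, Φ f ≤ p (0, f)) : ∃ L : V →ₗ[ℝ] ℝ, ∀ g f, L g + Φ f ≤ p (g, f) := by
  obtain ⟨L, L_eq, L_le⟩ := exists_extension_of_le_sublinear
    ((Φ ∘ₗ LinearMap.snd ℝ V E).toPMap (.prod ⊥ ⊤)) p p_smul p_add <| by
      rintro ⟨⟨g, f⟩, hg, -⟩
      obtain rfl : g = 0 := hg
      exact Φ_le_p f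
  refine ⟨L ∘ₗ LinearMap.inl ℝ V E, fun g f ↦ ?_⟩
  have L_zero : L (0, f) = Φ f := L_eq ⟨(0, f), by simp⟩
  calc
    L (g, 0) + Φ f = L (g, f) := by rw [← L_zero, ← map_add, Prod.mk_add_mk, add_zero, zero_add]
    _ ≤ p (g, f) := L_le (g, f)

section PositiveFunctional

variable {K : Type*} [TopologicalSpace K] [CompactSpace K]

theorem norm_abs_continuousMap (g : C(K, ℝ)) : ‖|g|‖ = ‖g‖ := by
  simp [ContinuousMap.norm_eq_iSup_norm]

theorem norm_posPart_le_iff {g : C(K, ℝ)} {r : ℝ} (hr : 0 ≤ r) : ‖g⁺‖ ≤ r ↔ ∀ k, g k ≤ r := by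
  simp [ContinuousMap.norm_le _ hr, posPart_def, abs_of_nonneg, hr]

theorem norm_posPart_smul {c : ℝ} (hc : 0 ≤ c) (g : C(K, ℝ)) : ‖(c • g)⁺‖ = c * ‖g⁺‖ := by
  have smul_posPart : (c • g)⁺ = c • g⁺ := by
    ext k
    simp [posPart_def, mul_max_of_nonneg _ _ hc]
  rw [smul_posPart, norm_smul, Real.norm_of_nonneg hc]

theorem apply_le_norm_posPart (g : C(K, ℝ)) (k : K) : g k ≤ ‖g⁺‖ :=
  (norm_posPart_le_iff (norm_nonneg _)).1 le_rfl k

theorem exists_positiveLinearMap_abs_le {E : Type*} [AddCommGroup E] [Module ℝ E]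
    (J : E →ₗ[ℝ] C(K, ℝ)) (Φ : E →ₗ[ℝ] ℝ) {C : ℝ} (hC : 0 ≤ C) (hΦ : ∀ f, Φ f ≤ C * ‖J f‖) :
    ∃ Λ : C(K, ℝ) →ₚ[ℝ] ℝ, ∀ f, |Φ f| ≤ Λ |J f| := by
  -- The sublinear `p` vanishes at `(g, 0)` for `g ≤ 0`, which forces positivity, and at
  -- `(-|J f|, f)`, which forces domination.
  let p : C(K, ℝ) × E → ℝ := fun x ↦ C * ‖(x.1 + |J x.2|)⁺‖
  have p_smul (c : ℝ) (hc : 0 < c) (x) : p (c • x) = c * p x := by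
    have : (c • x).1 + |J (c • x).2| = c • (x.1 + |J x.2|) := by
      ext k
      simp [abs_mul, abs_of_pos hc]
    simp only [p, this, norm_posPart_smul hc.le]
    ring
  have p_add (x y) : p (x + y) ≤ p x + p y := by
    rw [← mul_add]
    refine mul_le_mul_of_nonneg_left ((norm_posPart_le_iff (by positivity)).2 fun k ↦ ?_) hC
    have hx := apply_le_norm_posPart (x.1 + |J x.2|) k
    have hy := apply_le_norm_posPart (y.1 + |J y.2|) k
    have hxy := abs_add_le (J x.2 k) (J y.2 k)
    simp only [Prod.fst_add, Prod.snd_add, map_add, ContinuousMap.add_apply,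
      ContinuousMap.abs_apply] at hx hy ⊢
    linarith
  have Φ_le_p (f) : Φ f ≤ p (0, f) := by
    simpa [p, posPart_of_nonneg (abs_nonneg (J f)), norm_abs_continuousMap] using hΦ f
  obtain ⟨L, L_add_le⟩ := exists_linearMap_add_le_sublinear Φ p p_smul p_add Φ_le_p
  have L_add_nonpos {g : C(K, ℝ)} {f : E} (h : g + |J f| ≤ 0) : L g + Φ f ≤ 0 := by
    simpa [p, posPart_of_nonpos h] using L_add_le g f
  have L_nonneg (g : C(K, ℝ)) (hg : 0 ≤ g) : 0 ≤ L g := by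
    simpa using L_add_nonpos (g := -g) (f := 0) (by simpa using hg)
  have Φ_le_L (f) : Φ f ≤ L |J f| := by
    simpa using L_add_nonpos (g := -|J f|) (f := f) (by simp)
  have neg_Φ_le_L (f) : -Φ f ≤ L |J f| := by
    simpa using Φ_le_L (-f)
  exact ⟨.mk₀ L L_nonneg, fun f ↦ abs_le'.2 ⟨Φ_le_L f, neg_Φ_le_L f⟩⟩

theorem tendsto_positiveLinearMap_of_bounded [T2Space K] {ι : Type*} {l : Filter ι}
    [l.IsCountablyGenerated] (Λ : C(K, ℝ) →ₚ[ℝ] ℝ) {g : ι → C(K, ℝ)} {g₀ : C(K, ℝ)} {C : ℝ}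
    (hC : ∀ᶠ i in l, ‖g i‖ ≤ C) (hg : ∀ k, Tendsto (fun i ↦ g i k) l (𝓝 (g₀ k))) :
    Tendsto (fun i ↦ Λ (g i)) l (𝓝 (Λ g₀)) := by
  borelize K
  let Λ' : CompactlySupportedContinuousMap K ℝ →ₚ[ℝ] ℝ :=
    .mk₀ { toFun := fun f ↦ Λ f, map_add' := fun f g ↦ map_add Λ (f : C(K, ℝ)) g,
           map_smul' := fun c f ↦ map_smul Λ c (f : C(K, ℝ)) }
      fun f hf ↦ Λ.map_nonneg hf
  have integral_eq (f : C(K, ℝ)) : ∫ k, f k ∂(RealRMK.rieszMeasure Λ') = Λ f :=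
    RealRMK.integral_rieszMeasure Λ' (CompactlySupportedContinuousMap.continuousMapEquiv f)
  simp only [← integral_eq]
  refine MeasureTheory.tendsto_integral_filter_of_dominated_convergence (fun _ ↦ C)
    (.of_forall fun i ↦ (map_continuous (g i)).aestronglyMeasurable) ?_
    (MeasureTheory.integrable_const C) (.of_forall hg)
  filter_upwards [hC] with i hi
  exact .of_forall fun k ↦ ((g i).norm_coe_le_norm k).trans hi

end PositiveFunctional

/-- Weakly null sequences, for the weak topology of a real normed space. -/
def WeaklyNull {X : Type*} [SeminormedAddCommGroup X] [NormedSpace ℝ X] (x : ℕ → X) : Prop :=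
  ∀ φ : StrongDual ℝ X, Tendsto (fun n ↦ φ (x n)) atTop (𝓝 0)

theorem WeaklyNull.exists_norm_le {X : Type*} [SeminormedAddCommGroup X] [NormedSpace ℝ X]
    {x : ℕ → X} (hx : WeaklyNull x) : ∃ C, ∀ n, ‖x n‖ ≤ C := by
  have bounded_apply (φ : StrongDual ℝ X) : ∃ C, ∀ n, ‖φ (x n)‖ ≤ C := by
    obtain ⟨C, hC⟩ := (hx φ).norm.bddAbove_range
    exact ⟨C, fun n ↦ hC ⟨n, rfl⟩⟩
  obtain ⟨C, hC⟩ := banach_steinhaus (g := fun n ↦ NormedSpace.inclusionInDoubleDual ℝ X (x n))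
    bounded_apply
  exact ⟨C, fun n ↦ ((NormedSpace.inclusionInDoubleDualLi ℝ).norm_map (x n)).ge.trans (hC n)⟩

section DualUnitBall

variable (X : Type*) [SeminormedAddCommGroup X] [NormedSpace ℝ X]

/-- The closed unit ball of the dual of `X`, carrying the weak-* topology, in which it is a compact
Hausdorff space. -/
abbrev DualUnitBall : Type _ :=
  (WeakDual.toStrongDual ⁻¹' Metric.closedBall 0 1 : Set (WeakDual ℝ X))

instance : CompactSpace (DualUnitBall X) :=
  isCompact_iff_compactSpace.1 (WeakDual.isCompact_closedBall _ _)

variable {X}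

theorem DualUnitBall.norm_apply_le (b : DualUnitBall X) (x : X) : ‖b.1 x‖ ≤ ‖x‖ := by
  have norm_le_one : ‖WeakDual.toStrongDual b.1‖ ≤ 1 := mem_closedBall_zero_iff.1 b.2
  simpa using ContinuousLinearMap.le_of_opNorm_le _ norm_le_one x

theorem DualUnitBall.exists_apply_eq_norm (x : X) : ∃ b : DualUnitBall X, b.1 x = ‖x‖ := by
  obtain ⟨φ, hφ, hφx⟩ := exists_dual_vector'' ℝ x
  exact ⟨⟨StrongDual.toWeakDual φ, mem_closedBall_zero_iff.2 hφ⟩, hφx⟩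

theorem DualUnitBall.continuous_eval : Continuous fun p : X × DualUnitBall X ↦ p.2.1 p.1 := by
  have continuous_right (x : X) : Continuous fun b : DualUnitBall X ↦ b.1 x :=
    (WeakDual.eval_continuous x).comp continuous_subtype_val
  have lipschitz_left (b : DualUnitBall X) : LipschitzWith 1 fun x : X ↦ b.1 x :=
    .of_dist_le_mul fun x y ↦ by
      simpa [dist_eq_norm] using b.norm_apply_le (x - y)
  exact continuous_prod_of_continuous_lipschitzWith _ 1 continuous_right lipschitz_left

end DualUnitBall

section Scalarization

variable (Ω X : Type*) [TopologicalSpace Ω] [SeminormedAddCommGroup X] [NormedSpace ℝ X]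

/-- The map `f ↦ ((ω, b) ↦ b (f ω))`, which represents `X`-valued functions on `Ω` by scalar
functions on `Ω × DualUnitBall X`. -/
noncomputable def scalarization : C(Ω, X) →ₗ[ℝ] C(Ω × DualUnitBall X, ℝ) where
  toFun f := ⟨fun p ↦ p.2.1 (f p.1), DualUnitBall.continuous_eval.comp
    (((map_continuous f).comp continuous_fst).prodMk continuous_snd)⟩
  map_add' f g := by ext; simp
  map_smul' c f := by ext; simp

variable {Ω X}

@[simp]
theorem scalarization_apply (f : C(Ω, X)) (p : Ω × DualUnitBall X) :
    scalarization Ω X f p = p.2.1 (f p.1) :=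
  rfl

variable [CompactSpace Ω]

@[simp]
theorem norm_scalarization (f : C(Ω, X)) : ‖scalarization Ω X f‖ = ‖f‖ := by
  apply le_antisymm
  · exact (ContinuousMap.norm_le _ (norm_nonneg _)).2 fun p ↦
      (p.2.norm_apply_le _).trans (f.norm_coe_le_norm p.1)
  · refine (ContinuousMap.norm_le _ (norm_nonneg _)).2 fun ω ↦ ?_
    obtain ⟨b, hb⟩ := DualUnitBall.exists_apply_eq_norm (f ω)
    calc
      ‖f ω‖ = scalarization Ω X f (ω, b) := hb.symm
      _ ≤ ‖scalarization Ω X f‖ := (scalarization Ω X f).apply_le_norm (ω, b)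

theorem weaklyNull_of_bounded_of_pointwise [T2Space Ω] {f : ℕ → C(Ω, X)} {C : ℝ}
    (hC : ∀ n, ‖f n‖ ≤ C) (hf : ∀ ω, WeaklyNull fun n ↦ f n ω) : WeaklyNull f := by
  intro Φ
  have Φ_le (f) : Φ f ≤ ‖Φ‖ * ‖scalarization Ω X f‖ := by
    simpa using (le_abs_self _).trans (Φ.le_opNorm f)
  obtain ⟨Λ, hΛ⟩ := exists_positiveLinearMap_abs_le (scalarization Ω X) (Φ : C(Ω, X) →ₗ[ℝ] ℝ)
    (norm_nonneg Φ) Φ_le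
  have abs_bounded (n : ℕ) : ‖|scalarization Ω X (f n)|‖ ≤ C := by
    rw [norm_abs_continuousMap, norm_scalarization]
    exact hC n
  have abs_pointwise (p : Ω × DualUnitBall X) :
      Tendsto (fun n ↦ |scalarization Ω X (f n)| p) atTop
        (𝓝 ((0 : C(Ω × DualUnitBall X, ℝ)) p)) := by
    simpa using (hf p.1 (WeakDual.toStrongDual p.2.1)).abs
  have tendsto_Λ := tendsto_positiveLinearMap_of_bounded Λ (.of_forall abs_bounded) abs_pointwise
  exact squeeze_zero_norm (fun n ↦ hΛ (f n)) (by simpa only [map_zero] using tendsto_Λ)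

end Scalarization

section Tensor

variable {Ω X : Type*} [TopologicalSpace Ω] [CompactSpace Ω] [NormedAddCommGroup X]
  [NormedSpace ℝ X]

theorem norm_tensor_le (φ : C(Ω, ℝ)) (x : X) : ‖tensor φ x‖ ≤ ‖φ‖ * ‖x‖ := by
  refine (ContinuousMap.norm_le _ (by positivity)).2 fun ω ↦ ?_
  exact (norm_smul_le _ _).trans (by gcongr; exact φ.norm_coe_le_norm ω)

theorem WeaklyNull.tensor_of_norm_le [T2Space Ω] {x : ℕ → X} (hx : WeaklyNull x)
    {φ : ℕ → C(Ω, ℝ)} {r : ℝ} (hφ : ∀ n, ‖φ n‖ ≤ r) : WeaklyNull fun n ↦ tensor (φ n) (x n) := by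
  obtain ⟨C, hC⟩ := hx.exists_norm_le
  refine weaklyNull_of_bounded_of_pointwise (C := r * C) (fun n ↦ ?_) fun ω ξ ↦ ?_
  · have hr : 0 ≤ r := (norm_nonneg _).trans (hφ n)
    exact (norm_tensor_le _ _).trans (by gcongr; exacts [hφ n, hC n])
  · have hφω (n : ℕ) : ‖φ n ω‖ ≤ r := ((φ n).norm_coe_le_norm ω).trans (hφ n)
    refine squeeze_zero_norm (fun n ↦ ?_) (by simpa using (hx ξ).norm.const_mul r)
    calc
      ‖ξ (φ n ω • x n)‖ = ‖φ n ω‖ * ‖ξ (x n)‖ := by rw [map_smul, norm_smul]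
      _ ≤ r * ‖ξ (x n)‖ := by gcongr; exact hφω n

theorem stmt5_general [T2Space Ω] {Y : Type*} [Norm Y] (U : C(Ω, X) → Y)
    (hDP : ∀ f : ℕ → C(Ω, X), WeaklyNull f → Tendsto (fun n ↦ ‖U (f n)‖) atTop (𝓝 0))
    (x : ℕ → X) (hx : WeaklyNull x) (ε : ℝ) (hε : 0 < ε) :
    ∃ N, ∀ n ≥ N, ∀ φ : C(Ω, ℝ), ‖φ‖ ≤ 1 → ‖U (tensor φ (x n))‖ ≤ ε := by
  have exists_witness (n : ℕ) : ∃ φ : C(Ω, ℝ), ‖φ‖ ≤ 1 ∧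
      (‖U (tensor φ (x n))‖ ≤ ε → ∀ ψ : C(Ω, ℝ), ‖ψ‖ ≤ 1 → ‖U (tensor ψ (x n))‖ ≤ ε) := by
    by_contra! no_witness
    obtain ⟨-, ψ, hψ, hψε⟩ := no_witness 0 (by simp)
    exact hψε.not_ge (no_witness ψ hψ).1
  choose φ hφ witness using exists_witness
  have eventually_le := (hDP _ (hx.tensor_of_norm_le hφ)).eventually_le_const hε
  exact eventually_atTop.1 (eventually_le.mono witness)

end Tensor

theorem stmt5 {Ω X Y : Type*} [TopologicalSpace Ω] [CompactSpace Ω] [T2Space Ω]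
    [NormedAddCommGroup X] [NormedSpace ℝ X] [CompleteSpace X]
    [NormedAddCommGroup Y] [NormedSpace ℝ Y] [CompleteSpace Y]
    (U : C(Ω, X) →L[ℝ] Y)
    (hDP : ∀ f : ℕ → C(Ω, X),
      (∀ Φ : C(Ω, X) →L[ℝ] ℝ, Tendsto (fun n => Φ (f n)) atTop (𝓝 0)) →
      Tendsto (fun n => ‖U (f n)‖) atTop (𝓝 0)) :
    ∀ x : ℕ → X, (∀ φ : X →L[ℝ] ℝ, Tendsto (fun n => φ (x n)) atTop (𝓝 0)) →
      ∀ ε > 0, ∃ N, ∀ n ≥ N, ∀ φ : C(Ω, ℝ), ‖φ‖ ≤ 1 →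
        ‖U (tensor φ (x n))‖ ≤ ε :=
  stmt5_general U hDP
end

section
/- Let $1 \le p < 2$, let $r$ satisfy $1/p = 1/2 + 1/r$, let $(\alpha_n) \in \ell_p$, and define the vector measure $G : \Sigma \to \ell_p$ on the Borel sets of $[0,1]$ by $G(E) = (\alpha_n \int_E r_n(t)\,dt)_n$, where $(r_n)$ are the Rademacher functions. Then the semivariation satisfies $\frac{1}{\sqrt 2}\|(\alpha_n)\|_{\ell_r} \le \|G\|([0,1]) \le \|(\alpha_n)\|_{\ell_r}$, where $\|G\|([0,1]) = \sup_{\|y^*\|_{\ell_q}\le 1} \int_0^1 |\sum_n \xi_n \alpha_n r_n(t)|\,dt$ for $y^* = (\xi_n) \in \ell_q$, $q$ the conjugate of $p$. -/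
open Filter Topology
open scoped ENNReal

/-- The `k`-th Rademacher function, `r_k(t) = sign (sin (2^k π t))`. -/
noncomputable def rademacher (k : ℕ) (t : ℝ) : ℝ :=
  Real.sign (Real.sin (2 ^ k * Real.pi * t))

/-!
The inequality between the first and second moments of a Rademacher sum `S = ∑ aᵢ xᵢ` with the
constant `1/√2` follows the argument of Latała and Oleszkiewicz. An even function on the cube
`{1, -1}ⁿ` has no Walsh component of odd degree, so the Poincaré inequality `Var f ≤ 𝓔 f` improves
to `2 Var f ≤ 𝓔 f` for it. For `f = |S|` the energy does not exceed that of `S`, which is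
`∑ aᵢ² = 𝔼 S²`, and therefore `2 (𝔼 S² - (𝔼 |S|)²) ≤ 𝔼 S²`.

The binary self-similarity of the Rademacher functions shows that they are distributed as uniform
signs, which transfers these bounds to integrals over `[0, 1]`. Up to the factor `1/√2`, the
semivariation is thus the norm of the diagonal operator `ξ ↦ (ξₙ αₙ)` from `ℓ_q` to `ℓ_2`, and this
norm is `‖α‖_r` by Hölder's inequality and its equality case.
-/

section SignCube

open Finset
open scoped BigOperators

section Cube

variable {ι : Type*} [DecidableEq ι]

/-- The point of the cube `{1, -1}^ι` obtained from `x` by changing the sign of its `i`-th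
coordinate; the neighbour of `x` in direction `i`. -/
def flipCoord (i : ι) (x : ι → ℤˣ) : ι → ℤˣ := Function.update x i (-x i)

lemma flipCoord_involutive (i : ι) : Function.Involutive (flipCoord i) := fun x => by
  simp [flipCoord]

lemma flipCoord_zero_cons {n : ℕ} (ε : ℤˣ) (x : Fin n → ℤˣ) :
    flipCoord 0 (Fin.cons ε x : Fin (n + 1) → ℤˣ) = Fin.cons (-ε) x := by
  simp [flipCoord, Fin.update_cons_zero]

lemma flipCoord_succ_cons {n : ℕ} (i : Fin n) (ε : ℤˣ) (x : Fin n → ℤˣ) :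
    flipCoord i.succ (Fin.cons ε x : Fin (n + 1) → ℤˣ) = Fin.cons ε (flipCoord i x) := by
  simp [flipCoord, Fin.cons_update]

lemma neg_fin_cons {n : ℕ} (ε : ℤˣ) (x : Fin n → ℤˣ) :
    -(Fin.cons ε x : Fin (n + 1) → ℤˣ) = Fin.cons (-ε) (-x) := by
  ext i
  cases i using Fin.cases <;> simp

variable [Fintype ι]

/-- The energy of `f` for the random walk on the cube `{1, -1}^ι`, the uniform average being
written `𝔼`. The factor `1/4` is chosen so that a Walsh character of degree `d` has energy `d`. -/
noncomputable def dirichletForm (f : (ι → ℤˣ) → ℝ) : ℝ :=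
  (∑ i, 𝔼 x, (f (flipCoord i x) - f x) ^ 2) / 4

lemma dirichletForm_nonneg (f : (ι → ℤˣ) → ℝ) : 0 ≤ dirichletForm f :=
  div_nonneg (sum_nonneg fun _ _ => expect_nonneg fun _ _ => sq_nonneg _) (by norm_num)

lemma dirichletForm_abs_le (f : (ι → ℤˣ) → ℝ) :
    dirichletForm (fun x => |f x|) ≤ dirichletForm f := by
  unfold dirichletForm
  gcongr ?_ / 4
  exact sum_le_sum fun i _ => expect_le_expect fun x _ =>
    sq_le_sq.2 (abs_abs_sub_abs_le (f (flipCoord i x)) (f x))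

end Cube

lemma sq_expect_le_expect_sq {κ : Type*} (s : Finset κ) (f : κ → ℝ) :
    (𝔼 x ∈ s, f x) ^ 2 ≤ 𝔼 x ∈ s, f x ^ 2 := by
  simpa only [expect_eq_sum_div_card] using sum_div_card_sq_le_sum_sq_div_card

section HeadSplitting

variable {n : ℕ}

lemma expect_fin_succ (f : (Fin (n + 1) → ℤˣ) → ℝ) :
    𝔼 x, f x = 𝔼 x : Fin n → ℤˣ, (f (Fin.cons 1 x) + f (Fin.cons (-1) x)) / 2 := by
  calc 𝔼 x, f x = 𝔼 y : ℤˣ × (Fin n → ℤˣ), f (Fin.cons y.1 y.2) :=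
        (Fintype.expect_equiv (Fin.consEquiv fun _ => ℤˣ) _ _ fun _ => rfl).symm
    _ = 𝔼 x : Fin n → ℤˣ, 𝔼 ε : ℤˣ, f (Fin.cons ε x) := by
        rw [← univ_product_univ, expect_product, expect_comm]
    _ = _ := expect_congr rfl fun x _ => by
        simp [expect_eq_sum_div_card]

/-- The average of `f` over its first coordinate, a function of the remaining ones. It is the part
`g` of the decomposition `f (ε, x) = g x + ε * h x` used for induction on the dimension. -/
noncomputable def headMean (f : (Fin (n + 1) → ℤˣ) → ℝ) (x : Fin n → ℤˣ) : ℝ :=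
  (f (Fin.cons 1 x) + f (Fin.cons (-1) x)) / 2

/-- Half the discrete derivative of `f` in its first coordinate: the part `h` of the decomposition
`f (ε, x) = g x + ε * h x`. -/
noncomputable def headDiff (f : (Fin (n + 1) → ℤˣ) → ℝ) (x : Fin n → ℤˣ) : ℝ :=
  (f (Fin.cons 1 x) - f (Fin.cons (-1) x)) / 2

lemma expect_headMean (f : (Fin (n + 1) → ℤˣ) → ℝ) : 𝔼 x, headMean f x = 𝔼 x, f x :=
  (expect_fin_succ f).symm

lemma expect_sq_fin_succ (f : (Fin (n + 1) → ℤˣ) → ℝ) :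
    𝔼 x, f x ^ 2 = 𝔼 x, headMean f x ^ 2 + 𝔼 x, headDiff f x ^ 2 := by
  rw [expect_fin_succ, ← expect_add_distrib]
  refine expect_congr rfl fun x _ => ?_
  unfold headMean headDiff
  ring

lemma dirichletForm_fin_succ (f : (Fin (n + 1) → ℤˣ) → ℝ) :
    dirichletForm f =
      dirichletForm (headMean f) + dirichletForm (headDiff f) + 𝔼 x, headDiff f x ^ 2 := by
  have head : 𝔼 x, (f (flipCoord 0 x) - f x) ^ 2 = 4 * 𝔼 x, headDiff f x ^ 2 := by
    rw [expect_fin_succ, mul_expect]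
    refine expect_congr rfl fun x _ => ?_
    simp only [flipCoord_zero_cons, headDiff, neg_neg]
    ring
  have tail (i : Fin n) : 𝔼 x, (f (flipCoord i.succ x) - f x) ^ 2 =
      𝔼 x, (headMean f (flipCoord i x) - headMean f x) ^ 2 +
        𝔼 x, (headDiff f (flipCoord i x) - headDiff f x) ^ 2 := by
    rw [expect_fin_succ, ← expect_add_distrib]
    refine expect_congr rfl fun x _ => ?_
    simp only [flipCoord_succ_cons, headMean, headDiff]
    ring
  simp only [dirichletForm, Fin.sum_univ_succ, head, tail, sum_add_distrib]
  ring

lemma expect_sub_neg_sq_fin_succ (f : (Fin (n + 1) → ℤˣ) → ℝ) :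
    𝔼 x, (f x - f (-x)) ^ 2 =
      𝔼 x, (headMean f x - headMean f (-x)) ^ 2 + 𝔼 x, (headDiff f x + headDiff f (-x)) ^ 2 := by
  rw [expect_fin_succ, ← expect_add_distrib]
  refine expect_congr rfl fun x _ => ?_
  simp only [neg_fin_cons, headMean, headDiff, neg_neg]
  ring

end HeadSplitting

section Poincare

variable {n : ℕ}

theorem expect_sq_sub_sq_expect_le_dirichletForm (f : (Fin n → ℤˣ) → ℝ) :
    𝔼 x, f x ^ 2 - (𝔼 x, f x) ^ 2 ≤ dirichletForm f := by
  induction n with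
  | zero => simp [dirichletForm]
  | succ n ih =>
    rw [expect_sq_fin_succ, dirichletForm_fin_succ, ← expect_headMean]
    linarith [ih (headMean f), dirichletForm_nonneg (headDiff f)]

-- On Walsh coefficients of degree `d` this is the inequality `2 * 1_{1 ≤ d} ≤ d + 1_{d odd}`.
theorem two_mul_expect_sq_sub_sq_expect_le (f : (Fin n → ℤˣ) → ℝ) :
    2 * (𝔼 x, f x ^ 2 - (𝔼 x, f x) ^ 2) ≤ dirichletForm f + (𝔼 x, (f x - f (-x)) ^ 2) / 4 := by
  induction n with
  | zero =>
    have neg_eq (x : Fin 0 → ℤˣ) : -x = x := Subsingleton.elim _ _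
    simp [dirichletForm, neg_eq]
  | succ n ih =>
    have expect_symmetrized : 𝔼 x, (headDiff f x + headDiff f (-x)) = 2 * 𝔼 x, headDiff f x := by
      rw [expect_add_distrib, Fintype.expect_equiv (Equiv.neg _) (fun x => headDiff f (-x)) _
        fun _ => rfl, two_mul]
    have jensen := sq_expect_le_expect_sq univ fun x => headDiff f x + headDiff f (-x)
    rw [expect_symmetrized] at jensen
    rw [expect_sq_fin_succ, dirichletForm_fin_succ, expect_sub_neg_sq_fin_succ, ← expect_headMean]
    linarith [ih (headMean f), expect_sq_sub_sq_expect_le_dirichletForm (headDiff f)]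

theorem two_mul_expect_sq_sub_sq_expect_le_of_even {f : (Fin n → ℤˣ) → ℝ} (hf : f.Even) :
    2 * (𝔼 x, f x ^ 2 - (𝔼 x, f x) ^ 2) ≤ dirichletForm f := by
  simpa [hf _] using two_mul_expect_sq_sub_sq_expect_le f

end Poincare

section SignSum

variable {ι : Type*} [Fintype ι]

/-- The Rademacher sum `∑ i, a i * x i` as a function on the cube `{1, -1}^ι`, signs being encoded
as units of `ℤ`. -/
def signSum (a : ι → ℝ) (x : ι → ℤˣ) : ℝ := ∑ i, a i * ((x i : ℤ) : ℝ)

lemma signSum_neg (a : ι → ℝ) (x : ι → ℤˣ) : signSum a (-x) = -signSum a x := by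
  simp [signSum]

variable [DecidableEq ι]

lemma signSum_flipCoord (a : ι → ℝ) (i : ι) (x : ι → ℤˣ) :
    signSum a (flipCoord i x) = signSum a x - 2 * (a i * ((x i : ℤ) : ℝ)) := by
  have diff : signSum a (flipCoord i x) - signSum a x = -(2 * (a i * ((x i : ℤ) : ℝ))) := by
    rw [signSum, signSum, ← sum_sub_distrib, Fintype.sum_eq_single i]
    · simp only [flipCoord, Function.update_self, Units.val_neg, Int.cast_neg]
      ring
    · intro j hj
      simp [flipCoord, hj]
  linarith

lemma sq_coe_sign (ε : ℤˣ) : ((ε : ℤ) : ℝ) ^ 2 = 1 := by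
  rcases Int.units_eq_one_or ε with rfl | rfl <;> norm_num

lemma dirichletForm_signSum (a : ι → ℝ) : dirichletForm (signSum a) = ∑ i, a i ^ 2 := by
  have sq_diff (i : ι) (x : ι → ℤˣ) :
      (signSum a (flipCoord i x) - signSum a x) ^ 2 = 4 * a i ^ 2 := by
    rw [signSum_flipCoord]
    linear_combination 4 * a i ^ 2 * sq_coe_sign (x i)
  simp only [dirichletForm, sq_diff, Fintype.expect_const, ← mul_sum]
  ring

lemma expect_coord_mul_coord (i j : ι) :
    𝔼 x : ι → ℤˣ, ((x i : ℤ) : ℝ) * ((x j : ℤ) : ℝ) = if i = j then 1 else 0 := by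
  split_ifs with hij
  · simp [hij, ← sq, sq_coe_sign]
  · have antisymm : 𝔼 x : ι → ℤˣ, ((x i : ℤ) : ℝ) * ((x j : ℤ) : ℝ) =
        𝔼 x : ι → ℤˣ, -(((x i : ℤ) : ℝ) * ((x j : ℤ) : ℝ)) :=
      Fintype.expect_equiv (flipCoord_involutive i).toPerm _ _ fun x => by
        simp [flipCoord, Ne.symm hij]
    rw [expect_neg_distrib] at antisymm
    linarith

lemma expect_signSum_sq (a : ι → ℝ) : 𝔼 x, signSum a x ^ 2 = ∑ i, a i ^ 2 := by
  simp only [sq, signSum, sum_mul_sum, mul_mul_mul_comm, expect_sum_comm, ← mul_expect,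
    expect_coord_mul_coord]
  simp

end SignSum

section FiniteKhinchin

theorem sum_sq_le_two_mul_sq_expect_abs_signSum {n : ℕ} (a : Fin n → ℝ) :
    ∑ i, a i ^ 2 ≤ 2 * (𝔼 x, |signSum a x|) ^ 2 := by
  have even : (fun x => |signSum a x|).Even := fun x => by simp only [signSum_neg, abs_neg]
  have poincare := two_mul_expect_sq_sub_sq_expect_le_of_even even
  have energy := dirichletForm_abs_le (signSum a)
  simp only [sq_abs, expect_signSum_sq] at poincare
  rw [dirichletForm_signSum] at energy
  linarith

theorem sq_expect_abs_signSum_le_sum_sq {ι : Type*} [Fintype ι] [DecidableEq ι] (a : ι → ℝ) :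
    (𝔼 x, |signSum a x|) ^ 2 ≤ ∑ i, a i ^ 2 := by
  simpa only [sq_abs, expect_signSum_sq] using
    sq_expect_le_expect_sq univ fun x => |signSum a x|

end FiniteKhinchin

end SignCube

section RademacherFunctions

open MeasureTheory
open scoped BigOperators

variable {n : ℕ}

lemma rademacher_succ (k : ℕ) (t : ℝ) : rademacher (k + 1) t = rademacher k (2 * t) := by
  unfold rademacher
  congr 2
  ring

lemma rademacher_succ_add_one (k : ℕ) (t : ℝ) :
    rademacher (k + 1) (t + 1) = rademacher (k + 1) t := by
  have shift : 2 ^ (k + 1) * Real.pi * (t + 1) =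
      2 ^ (k + 1) * Real.pi * t + (2 ^ k : ℕ) * (2 * Real.pi) := by
    push_cast
    ring
  rw [rademacher, shift, Real.sin_add_nat_mul_two_pi, rademacher]

lemma rademacher_add_two (k : ℕ) (t : ℝ) :
    rademacher (k + 2) t = rademacher (k + 1) (2 * t - 1) := by
  rw [rademacher_succ, ← rademacher_succ_add_one k (2 * t - 1), sub_add_cancel]

lemma rademacher_one_of_lt_half {t : ℝ} (h0 : 0 < t) (h1 : t < 1 / 2) : rademacher 1 t = 1 := by
  refine Real.sign_of_pos (Real.sin_pos_of_pos_of_lt_pi (by positivity) ?_)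
  nlinarith [Real.pi_pos]

lemma rademacher_one_of_half_lt {t : ℝ} (h0 : 1 / 2 < t) (h1 : t < 1) : rademacher 1 t = -1 := by
  refine Real.sign_of_neg ?_
  rw [← Real.sin_sub_two_pi]
  apply Real.sin_neg_of_neg_of_neg_pi_lt <;> nlinarith [Real.pi_pos]

lemma abs_rademacher_le_one (k : ℕ) (t : ℝ) : |rademacher k t| ≤ 1 := by
  unfold rademacher
  rcases Real.sign_apply_eq (Real.sin (2 ^ k * Real.pi * t)) with h | h | h <;> simp [h]

/-- The first `n` Rademacher functions `r_1, ..., r_n` as one `ℝⁿ`-valued function, with `r_{i+1}`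
in coordinate `i`; its distribution is uniform on the sign vectors. -/
noncomputable def rademacherVec (n : ℕ) (t : ℝ) (i : Fin n) : ℝ := rademacher (i + 1) t

lemma rademacherVec_succ_of_mem_left {t : ℝ} (ht : t ∈ Set.Ioo 0 (1 / 2)) :
    rademacherVec (n + 1) t = Fin.cons 1 (rademacherVec n (2 * t)) := by
  ext i
  cases i using Fin.cases with
  | zero => exact rademacher_one_of_lt_half ht.1 ht.2
  | succ j => exact rademacher_succ (j + 1) t

lemma rademacherVec_succ_of_mem_right {t : ℝ} (ht : t ∈ Set.Ioo (1 / 2) 1) :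
    rademacherVec (n + 1) t = Fin.cons (-1) (rademacherVec n (2 * t - 1)) := by
  ext i
  cases i using Fin.cases with
  | zero => exact rademacher_one_of_half_lt ht.1 ht.2
  | succ j => exact rademacher_add_two j t

lemma intervalIntegrable_of_eqOn_halves {E : Type*} [NormedAddCommGroup E] {f g h : ℝ → E}
    (hg : IntervalIntegrable g volume 0 1) (hh : IntervalIntegrable h volume 0 1)
    (left : Set.EqOn f (fun t => g (2 * t)) (Set.Ioo 0 (1 / 2)))
    (right : Set.EqOn f (fun t => h (2 * t - 1)) (Set.Ioo (1 / 2) 1)) :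
    IntervalIntegrable f volume 0 (1 / 2) ∧ IntervalIntegrable f volume (1 / 2) 1 := by
  have hg' : IntervalIntegrable (fun t => g (2 * t)) volume 0 (1 / 2) := by
    simpa using hg.comp_mul_left (c := 2)
  have hh' : IntervalIntegrable (fun t => h (2 * t - 1)) volume (1 / 2) 1 := by
    convert! (hh.comp_sub_right 1).comp_mul_left (c := 2) using 1 <;> norm_num
  rw [← Set.uIoo_of_le (by norm_num)] at left right
  exact ⟨hg'.congr_uIoo left.symm, hh'.congr_uIoo right.symm⟩

lemma integral_of_eqOn_halves {E : Type*} [NormedAddCommGroup E] [NormedSpace ℝ E] {f g h : ℝ → E}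
    (hg : IntervalIntegrable g volume 0 1) (hh : IntervalIntegrable h volume 0 1)
    (left : Set.EqOn f (fun t => g (2 * t)) (Set.Ioo 0 (1 / 2)))
    (right : Set.EqOn f (fun t => h (2 * t - 1)) (Set.Ioo (1 / 2) 1)) :
    ∫ t in (0 : ℝ)..1, f t =
      (2 : ℝ)⁻¹ • ((∫ t in (0 : ℝ)..1, g t) + ∫ t in (0 : ℝ)..1, h t) := by
  obtain ⟨hf_left, hf_right⟩ := intervalIntegrable_of_eqOn_halves hg hh left right
  rw [← intervalIntegral.integral_add_adjacent_intervals hf_left hf_right,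
    intervalIntegral.integral_congr_Ioo_of_le (by norm_num) left,
    intervalIntegral.integral_congr_Ioo_of_le (by norm_num) right,
    intervalIntegral.integral_comp_mul_left _ two_ne_zero,
    intervalIntegral.integral_comp_mul_sub _ two_ne_zero, smul_add]
  norm_num

theorem intervalIntegrable_comp_rademacherVec {E : Type*} [NormedAddCommGroup E]
    (F : (Fin n → ℝ) → E) :
    IntervalIntegrable (fun t => F (rademacherVec n t)) volume 0 1 := by
  induction n with
  | zero => simp [Subsingleton.elim (rademacherVec 0 _) ![]]
  | succ n ih =>
    obtain ⟨left, right⟩ := intervalIntegrable_of_eqOn_halves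
      (f := fun t => F (rademacherVec (n + 1) t))
      (ih fun y => F (Fin.cons 1 y)) (ih fun y => F (Fin.cons (-1) y))
      (fun t ht => congrArg F (rademacherVec_succ_of_mem_left ht))
      (fun t ht => congrArg F (rademacherVec_succ_of_mem_right ht))
    exact left.trans right

lemma coe_fin_cons (ε : ℤˣ) (x : Fin n → ℤˣ) :
    (fun i => (((Fin.cons ε x : Fin (n + 1) → ℤˣ) i : ℤ) : ℝ)) =
      Fin.cons ((ε : ℤ) : ℝ) fun i => ((x i : ℤ) : ℝ) := by
  ext i
  cases i using Fin.cases <;> rfl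

theorem integral_comp_rademacherVec (F : (Fin n → ℝ) → ℝ) :
    ∫ t in (0 : ℝ)..1, F (rademacherVec n t) = 𝔼 x : Fin n → ℤˣ, F fun i => ((x i : ℤ) : ℝ) := by
  induction n with
  | zero => simp [Subsingleton.elim (fun _ => _) ![]]
  | succ n ih =>
    rw [integral_of_eqOn_halves (f := fun t => F (rademacherVec (n + 1) t))
      (intervalIntegrable_comp_rademacherVec fun y => F (Fin.cons 1 y))
      (intervalIntegrable_comp_rademacherVec fun y => F (Fin.cons (-1) y))
      (fun t ht => congrArg F (rademacherVec_succ_of_mem_left ht))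
      (fun t ht => congrArg F (rademacherVec_succ_of_mem_right ht)),
      ih fun y => F (Fin.cons 1 y), ih fun y => F (Fin.cons (-1) y), expect_fin_succ,
      ← Finset.expect_add_distrib, Finset.smul_expect]
    simp [coe_fin_cons, div_eq_inv_mul]

end RademacherFunctions

section DiagonalMultiplication

variable {ι : Type*} {q r : ℝ≥0∞}

-- For `q = ∞` the exponent `ρ / q.toReal` is `ρ / 0 = 0`, and `ξ` is the constant `1`.
lemma exists_lp_norm_le_one_eq_rpow (hq : q ≠ 0) {ρ : ℝ} {b : ι → ℝ} (hb : ∀ i, 0 ≤ b i)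
    (hsum : HasSum (fun i => b i ^ ρ) 1) :
    ∃ ξ : lp (fun _ : ι => ℝ) q, ‖ξ‖ ≤ 1 ∧ ∀ i, ξ i = b i ^ (ρ / q.toReal) := by
  rcases eq_or_ne q ∞ with rfl | hq_top
  · have mem : Memℓp (fun _ : ι => (1 : ℝ)) ∞ := one_memℓp_infty
    exact ⟨⟨_, mem⟩, lp.norm_le_of_forall_le zero_le_one fun i => by simp, fun i => by simp⟩
  · have hq_pos : 0 < q.toReal := ENNReal.toReal_pos hq hq_top
    have pow_q (i : ι) : ‖b i ^ (ρ / q.toReal)‖ ^ q.toReal = b i ^ ρ := by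
      rw [Real.norm_of_nonneg (Real.rpow_nonneg (hb i) _), ← Real.rpow_mul (hb i),
        div_mul_cancel₀ _ hq_pos.ne']
    have mem : Memℓp (fun i => b i ^ (ρ / q.toReal)) q :=
      memℓp_gen (by simpa only [pow_q] using hsum.summable)
    refine ⟨⟨_, mem⟩, lp.norm_le_of_tsum_le hq_pos zero_le_one ?_, fun _ => rfl⟩
    simp only [pow_q, hsum.tsum_eq, Real.one_rpow, le_refl]

lemma toReal_inv_add_toReal_inv (q r s : ℝ≥0∞) [q.HolderTriple r s] (hs : s ≠ 0) :
    q.toReal⁻¹ + r.toReal⁻¹ = s.toReal⁻¹ := by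
  have h := ENNReal.HolderTriple.inv_add_inv_eq_inv q r s
  have hs' : s⁻¹ ≠ ∞ := ENNReal.inv_ne_top.2 hs
  rw [← h, ENNReal.add_ne_top] at hs'
  simp only [← ENNReal.toReal_inv]
  rw [← h, ENNReal.toReal_add hs'.1 hs'.2]

lemma div_toReal_add_one_mul_toReal (q r s : ℝ≥0∞) [q.HolderTriple r s] (hr : r.toReal ≠ 0)
    (hs : s.toReal ≠ 0) : (r.toReal / q.toReal + 1) * s.toReal = r.toReal := by
  have conj := toReal_inv_add_toReal_inv q r s fun h => hs (by simp [h])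
  calc (r.toReal / q.toReal + 1) * s.toReal
      = r.toReal * (q.toReal⁻¹ + r.toReal⁻¹) * s.toReal := by
        rw [mul_add, mul_inv_cancel₀ hr, div_eq_mul_inv]
    _ = r.toReal := by rw [conj, inv_mul_cancel_right₀ hs]

lemma hasSum_norm_div_norm_rpow [Fact (1 ≤ r)] (hr : 0 < r.toReal) {a : lp (fun _ : ι => ℝ) r}
    (ha : a ≠ 0) : HasSum (fun i => (‖a i‖ / ‖a‖) ^ r.toReal) 1 := by
  have ha_pos : 0 < ‖a‖ := norm_pos_iff.2 ha
  simp only [Real.div_rpow (norm_nonneg _) ha_pos.le]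
  rw [← div_self (Real.rpow_pos_of_pos ha_pos r.toReal).ne']
  exact (lp.hasSum_norm hr a).div_const _

/-- The diagonal operator `ξ ↦ (ξ i * a i)` from `ℓ_q` to `ℓ_s` attached to `a ∈ ℓ_r`, where
`1/s = 1/q + 1/r`; it turns the semivariation into an operator norm. The target exponent `s` is
explicit because it is not determined by the type of `a`. -/
noncomputable def diagonalMul [Fact (1 ≤ q)] [Fact (1 ≤ r)] (s : ℝ≥0∞) [Fact (1 ≤ s)]
    [q.HolderTriple r s] (a : lp (fun _ : ι => ℝ) r) :
    lp (fun _ : ι => ℝ) q →L[ℝ] lp (fun _ : ι => ℝ) s :=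
  (lp.holderL s (fun _ => ContinuousLinearMap.mul ℝ ℝ) (K := 1)
    fun _ => ContinuousLinearMap.opNorm_mul_le ℝ ℝ).flip a

variable {s : ℝ≥0∞} [Fact (1 ≤ q)] [Fact (1 ≤ r)] [Fact (1 ≤ s)] [q.HolderTriple r s]

lemma diagonalMul_apply (a : lp (fun _ : ι => ℝ) r) (ξ : lp (fun _ : ι => ℝ) q) (i : ι) :
    diagonalMul s a ξ i = ξ i * a i := rfl

lemma norm_diagonalMul_le (a : lp (fun _ : ι => ℝ) r) :
    ‖(diagonalMul s a : lp (fun _ : ι => ℝ) q →L[ℝ] lp (fun _ : ι => ℝ) s)‖ ≤ ‖a‖ := by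
  refine (ContinuousLinearMap.le_opNorm _ a).trans ?_
  rw [ContinuousLinearMap.opNorm_flip]
  exact mul_le_of_le_one_left (norm_nonneg a) (lp.norm_holderL_le s _ _)

theorem exists_norm_diagonalMul_eq (hr : r ≠ ∞) (a : lp (fun _ : ι => ℝ) r) :
    ∃ ξ : lp (fun _ : ι => ℝ) q, ‖ξ‖ ≤ 1 ∧ ‖diagonalMul s a ξ‖ = ‖a‖ := by
  rcases eq_or_ne a 0 with rfl | ha
  · exact ⟨0, by simp, by simp⟩
  have ne_zero {t : ℝ≥0∞} [ht : Fact (1 ≤ t)] : t ≠ 0 := (zero_lt_one.trans_le ht.out).ne'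
  have hs : s ≠ ∞ := ((ENNReal.HolderTriple.le r q s).trans_lt hr.lt_top).ne
  have hr_pos : 0 < r.toReal := ENNReal.toReal_pos ne_zero hr
  have hs_pos : 0 < s.toReal := ENNReal.toReal_pos ne_zero hs
  have ha_pos : 0 < ‖a‖ := norm_pos_iff.2 ha
  have hb (i : ι) : 0 ≤ ‖a i‖ / ‖a‖ := by positivity
  have sum_one := hasSum_norm_div_norm_rpow hr_pos ha
  obtain ⟨ξ, hξ, ξ_apply⟩ := exists_lp_norm_le_one_eq_rpow (q := q) ne_zero hb sum_one
  refine ⟨ξ, hξ, ?_⟩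
  have norm_apply (i : ι) : ‖diagonalMul s a ξ i‖ =
      ‖a‖ * (‖a i‖ / ‖a‖) ^ (r.toReal / q.toReal + 1) := by
    rw [diagonalMul_apply, ξ_apply, norm_mul, Real.norm_of_nonneg (Real.rpow_nonneg (hb i) _),
      Real.rpow_add_of_nonneg (hb i) (by positivity) zero_le_one, Real.rpow_one]
    field_simp
  have pow_s (i : ι) : ‖diagonalMul s a ξ i‖ ^ s.toReal =
      ‖a‖ ^ s.toReal * (‖a i‖ / ‖a‖) ^ r.toReal := by
    rw [norm_apply, Real.mul_rpow ha_pos.le (Real.rpow_nonneg (hb i) _), ← Real.rpow_mul (hb i),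
      div_toReal_add_one_mul_toReal q r s hr_pos.ne' hs_pos.ne']
  have pow_norm : ‖diagonalMul s a ξ‖ ^ s.toReal = ‖a‖ ^ s.toReal := by
    rw [lp.norm_rpow_eq_tsum hs_pos]
    simp only [pow_s, tsum_mul_left, sum_one.tsum_eq, mul_one]
  exact (Real.rpow_left_inj (norm_nonneg _) ha_pos.le hs_pos.ne').1 pow_norm

end DiagonalMultiplication

section KhinchinInequality

open MeasureTheory
open scoped BigOperators

lemma sum_range_mul_rademacher (c : ℕ → ℝ) (N : ℕ) (t : ℝ) :
    ∑ n ∈ Finset.range N, c n * rademacher (n + 1) t = ∑ i : Fin N, c i * rademacherVec N t i :=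
  (Fin.sum_univ_eq_sum_range (fun n => c n * rademacher (n + 1) t) N).symm

lemma integral_abs_sum_rademacher (c : ℕ → ℝ) (N : ℕ) :
    ∫ t in (0 : ℝ)..1, |∑ n ∈ Finset.range N, c n * rademacher (n + 1) t| =
      𝔼 x : Fin N → ℤˣ, |signSum (fun i : Fin N => c i) x| := by
  simp only [sum_range_mul_rademacher]
  exact integral_comp_rademacherVec fun y => |∑ i : Fin N, c i * y i|

lemma tendsto_integral_abs_sum_rademacher {c : ℕ → ℝ} (hc : Summable c) :
    Tendsto (fun N => ∫ t in (0 : ℝ)..1, |∑ n ∈ Finset.range N, c n * rademacher (n + 1) t|) atTop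
      (𝓝 (∫ t in (0 : ℝ)..1, |∑' n, c n * rademacher (n + 1) t|)) := by
  have hc_abs : Summable fun n => |c n| := hc.abs
  have term_le (t : ℝ) (n : ℕ) : |c n * rademacher (n + 1) t| ≤ |c n| := by
    rw [abs_mul]
    exact mul_le_of_le_one_right (abs_nonneg _) (abs_rademacher_le_one _ _)
  refine intervalIntegral.tendsto_integral_filter_of_dominated_convergence
    (fun _ => ∑' n, |c n|) (.of_forall fun N => ?_)
    (.of_forall fun N => .of_forall fun t _ => ?_) intervalIntegrable_const
    (.of_forall fun t _ => ?_)
  · simp only [sum_range_mul_rademacher]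
    have integrable := intervalIntegrable_comp_rademacherVec fun y => |∑ i : Fin N, c i * y i|
    exact integrable.aestronglyMeasurable_restrict_uIoc
  · rw [Real.norm_eq_abs, abs_abs]
    calc |∑ n ∈ Finset.range N, c n * rademacher (n + 1) t|
        ≤ ∑ n ∈ Finset.range N, |c n * rademacher (n + 1) t| := Finset.abs_sum_le_sum_abs _ _
      _ ≤ ∑ n ∈ Finset.range N, |c n| := Finset.sum_le_sum fun n _ => term_le t n
      _ ≤ ∑' n, |c n| := hc_abs.sum_le_tsum _ fun n _ => abs_nonneg _
  · exact (Summable.of_norm_bounded hc_abs (term_le t)).hasSum.tendsto_sum_nat.abs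

lemma tendsto_sum_fin_sq (c : lp (fun _ : ℕ => ℝ) 2) :
    Tendsto (fun N => ∑ i : Fin N, c i ^ 2) atTop (𝓝 (‖c‖ ^ 2)) := by
  have sum_sq : HasSum (fun n => c n ^ 2) (‖c‖ ^ 2) := by
    simpa using lp.hasSum_norm (p := 2) (by norm_num) c
  simpa only [Fin.sum_univ_eq_sum_range fun n => c n ^ 2] using sum_sq.tendsto_sum_nat

theorem norm_le_integral_abs_tsum_rademacher {c : lp (fun _ : ℕ => ℝ) 2} (hc : Summable c) :
    (√2)⁻¹ * ‖c‖ ≤ ∫ t in (0 : ℝ)..1, |∑' n, c n * rademacher (n + 1) t| := by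
  have lim := ((tendsto_integral_abs_sum_rademacher hc).pow 2).const_mul 2
  have sq_le := le_of_tendsto_of_tendsto' (tendsto_sum_fin_sq c) lim fun N => by
    rw [integral_abs_sum_rademacher]
    exact sum_sq_le_two_mul_sq_expect_abs_signSum _
  refine le_of_sq_le_sq ?_ (intervalIntegral.integral_nonneg zero_le_one fun _ _ => abs_nonneg _)
  rw [mul_pow, inv_pow, Real.sq_sqrt zero_le_two]
  linarith

theorem integral_abs_tsum_rademacher_le_norm {c : lp (fun _ : ℕ => ℝ) 2} (hc : Summable c) :
    ∫ t in (0 : ℝ)..1, |∑' n, c n * rademacher (n + 1) t| ≤ ‖c‖ := by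
  have lim := (tendsto_integral_abs_sum_rademacher hc).pow 2
  refine le_of_sq_le_sq (le_of_tendsto_of_tendsto' lim (tendsto_sum_fin_sq c) fun N => ?_)
    (norm_nonneg c)
  rw [integral_abs_sum_rademacher]
  exact sq_expect_abs_signSum_le_sum_sq _

end KhinchinInequality

section Semivariation

lemma ofReal_inv_eq_inv_two_add {p r : ℝ} (hp : 0 < p) (hr : 0 < r) (h : 1 / p = 1 / 2 + 1 / r) :
    (ENNReal.ofReal p)⁻¹ = 2⁻¹ + (ENNReal.ofReal r)⁻¹ := by
  simp only [one_div] at h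
  rw [← ENNReal.ofReal_inv_of_pos hp, ← ENNReal.ofReal_inv_of_pos hr, h,
    ENNReal.ofReal_add (by positivity) (by positivity), ENNReal.ofReal_inv_of_pos two_pos,
    ENNReal.ofReal_ofNat]

variable {p q r : ℝ≥0∞}

lemma holderTriple_two_of_inv_eq (hpq : p⁻¹ + q⁻¹ = 1) (hpr : p⁻¹ = 2⁻¹ + r⁻¹) :
    q.HolderTriple r 2 where
  inv_add_inv_eq_inv := by
    have half_ne_top : (2 : ℝ≥0∞)⁻¹ ≠ ∞ := by simp
    rw [← ENNReal.add_right_inj half_ne_top, ENNReal.inv_two_add_inv_two, ← hpq, hpr]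
    ring

lemma summable_mul_of_memℓp [q.HolderConjugate p] {ι : Type*} {ξ a : ι → ℝ} (hξ : Memℓp ξ q)
    (ha : Memℓp a p) : Summable fun i => ξ i * a i := by
  have mem : Memℓp (fun i => ξ i * a i) 1 :=
    hξ.holder 1 ha (fun _ => ContinuousLinearMap.mul ℝ ℝ) (K := 1)
      fun _ => ContinuousLinearMap.opNorm_mul_le ℝ ℝ
  exact .of_norm (by simpa using mem.summable (by norm_num))

lemma lp_norm_eq_tsum_abs_rpow {ι : Type*} {r : ℝ} (hr : 0 < r)
    (a : lp (fun _ : ι => ℝ) (ENNReal.ofReal r)) : ‖a‖ = (∑' i, |a i| ^ r) ^ (1 / r) := by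
  have toReal_r := ENNReal.toReal_ofReal hr.le
  rw [lp.norm_eq_tsum_rpow (toReal_r.symm ▸ hr), toReal_r]
  rfl

variable [Fact (1 ≤ q)] [Fact (1 ≤ r)] [q.HolderTriple r 2]

theorem integral_abs_tsum_mul_rademacher_le_norm (a : lp (fun _ : ℕ => ℝ) r)
    {ξ : lp (fun _ : ℕ => ℝ) q} (hξ : ‖ξ‖ ≤ 1) (hsum : Summable fun n => ξ n * a n) :
    ∫ t in (0 : ℝ)..1, |∑' n, ξ n * a n * rademacher (n + 1) t| ≤ ‖a‖ :=
  calc ∫ t in (0 : ℝ)..1, |∑' n, ξ n * a n * rademacher (n + 1) t|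
      ≤ ‖diagonalMul 2 a ξ‖ := integral_abs_tsum_rademacher_le_norm (c := diagonalMul 2 a ξ) hsum
    _ ≤ ‖a‖ * ‖ξ‖ := ContinuousLinearMap.le_of_opNorm_le _ (norm_diagonalMul_le a) ξ
    _ ≤ ‖a‖ := mul_le_of_le_one_right (norm_nonneg a) hξ

theorem exists_norm_le_integral_abs_tsum_mul_rademacher (hr : r ≠ ∞) (a : lp (fun _ : ℕ => ℝ) r)
    (hsum : ∀ ξ : lp (fun _ : ℕ => ℝ) q, Summable fun n => ξ n * a n) :
    ∃ ξ : lp (fun _ : ℕ => ℝ) q, ‖ξ‖ ≤ 1 ∧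
      (√2)⁻¹ * ‖a‖ ≤ ∫ t in (0 : ℝ)..1, |∑' n, ξ n * a n * rademacher (n + 1) t| := by
  obtain ⟨ξ, hξ, norm_eq⟩ := exists_norm_diagonalMul_eq (q := q) (s := 2) hr a
  refine ⟨ξ, hξ, ?_⟩
  rw [← norm_eq]
  exact norm_le_integral_abs_tsum_rademacher (c := diagonalMul 2 a ξ) (hsum ξ)

/-- The semivariation on `[0, 1]` of the vector measure `E ↦ (a n * ∫ t in E, r_{n+1}(t))` with
values in `ℓ_p`, `q` being the exponent conjugate to `p`: the total variation of the scalar measure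
given by `ξ ∈ ℓ_q` is the integral of the absolute value of its density. -/
noncomputable def rademacherSemivariation (q : ℝ≥0∞) (a : ℕ → ℝ) : ℝ :=
  sSup {s : ℝ | ∃ ξ : lp (fun _ : ℕ => ℝ) q, ‖ξ‖ ≤ 1 ∧
    s = ∫ t in (0 : ℝ)..1, |∑' n, ξ n * a n * rademacher (n + 1) t|}

variable [q.HolderConjugate p]

theorem rademacherSemivariation_le_norm (a : lp (fun _ : ℕ => ℝ) r) (ha : Memℓp a p) :
    rademacherSemivariation q a ≤ ‖a‖ := by
  refine csSup_le ⟨_, 0, by simp, rfl⟩ ?_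
  rintro _ ⟨ξ, hξ, rfl⟩
  exact integral_abs_tsum_mul_rademacher_le_norm a hξ (summable_mul_of_memℓp (lp.memℓp ξ) ha)

theorem norm_le_rademacherSemivariation (hr : r ≠ ∞) (a : lp (fun _ : ℕ => ℝ) r)
    (ha : Memℓp a p) : (√2)⁻¹ * ‖a‖ ≤ rademacherSemivariation q a := by
  have hsum (ξ : lp (fun _ : ℕ => ℝ) q) : Summable fun n => ξ n * a n :=
    summable_mul_of_memℓp (lp.memℓp ξ) ha
  obtain ⟨ξ, hξ, lower⟩ := exists_norm_le_integral_abs_tsum_mul_rademacher hr a hsum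
  refine lower.trans (le_csSup ⟨‖a‖, ?_⟩ ⟨ξ, hξ, rfl⟩)
  rintro _ ⟨η, hη, rfl⟩
  exact integral_abs_tsum_mul_rademacher_le_norm a hη (hsum η)

end Semivariation

theorem stmt14 (p : ℝ) (q : ℝ≥0∞) (r : ℝ) (hp1 : 1 ≤ p) (hp2 : p < 2)
    (hq : (ENNReal.ofReal p)⁻¹ + q⁻¹ = 1) (hr : 1 / p = 1 / 2 + 1 / r)
    (α : ℕ → ℝ) (hα : Summable fun n => |α n| ^ p) :
    (Real.sqrt 2)⁻¹ * (∑' n, |α n| ^ r) ^ (1 / r) ≤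
      sSup {s : ℝ | ∃ ξ : lp (fun _ : ℕ => ℝ) q, ‖ξ‖ ≤ 1 ∧
        s = ∫ t in (0:ℝ)..1, |∑' n, ξ n * α n * rademacher (n + 1) t|} ∧
    sSup {s : ℝ | ∃ ξ : lp (fun _ : ℕ => ℝ) q, ‖ξ‖ ≤ 1 ∧
        s = ∫ t in (0:ℝ)..1, |∑' n, ξ n * α n * rademacher (n + 1) t|} ≤
      (∑' n, |α n| ^ r) ^ (1 / r) := by
  have hp_pos : 0 < p := zero_lt_one.trans_le hp1
  have hr_pos : 0 < r := by
    have half_lt : 1 / 2 < 1 / p := one_div_lt_one_div_of_lt hp_pos hp2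
    exact one_div_pos.1 (by linarith)
  have hpr := ofReal_inv_eq_inv_two_add hp_pos hr_pos hr
  have : q.HolderTriple (.ofReal r) 2 := holderTriple_two_of_inv_eq hq hpr
  have : q.HolderConjugate (.ofReal p) := ⟨by rw [add_comm, hq, inv_one]⟩
  have : Fact (1 ≤ q) := ⟨ENNReal.HolderTriple.le q (.ofReal p) 1⟩
  have : Fact (1 ≤ ENNReal.ofReal r) :=
    ⟨one_le_two.trans (ENNReal.HolderTriple.le (.ofReal r) q 2)⟩
  have mem_p : Memℓp α (.ofReal p) := memℓp_gen (by simpa [hp_pos.le] using hα)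
  have p_le_r : ENNReal.ofReal p ≤ .ofReal r := ENNReal.inv_le_inv.1 (hpr ▸ le_add_self)
  let a : lp (fun _ : ℕ => ℝ) (.ofReal r) := ⟨α, mem_p.of_exponent_ge p_le_r⟩
  rw [← lp_norm_eq_tsum_abs_rpow hr_pos a]
  exact ⟨norm_le_rademacherSemivariation ENNReal.ofReal_ne_top a mem_p,
    rademacherSemivariation_le_norm a mem_p⟩
end
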